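/- arXiv:1108.3249 — 3 statements merged into one kernel-verified Lean document; each statement's English description precedes it below -/
import Mathlib

section
/- Let q be a permutation of length k, let m, n be positive integers, and let d be a constant such that every simple bipartite graph on ([n],[n]) avoiding the bipartite graph G_q as an ordered subgraph has at most d·n edges. Then G_{n,m}(q) ≤ (2^m − 1)^(d·n) · G_{n,1}(q), where G_{n,m}(q) denotes the number of simple bipartite graphs on ([n·m],[n]) avoiding G_q. -/
/-- A permutation `p` of length `n` contains the permutation `q` of length `k` as a pattern. -/
def PermContains {n k : ℕ} (p : Equiv.Perm (Fin n)) (q : Equiv.Perm (Fin k)) : Prop :=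
  ∃ f : Fin k → Fin n, StrictMono f ∧ ∀ a b : Fin k, p (f a) < p (f b) ↔ q a < q b

/-- A word `w` over `{1,…,n}` contains the permutation pattern `q` of length `k`. -/
def WordContains {l n k : ℕ} (w : Fin l → Fin n) (q : Equiv.Perm (Fin k)) : Prop :=
  ∃ f : Fin k → Fin l, StrictMono f ∧ ∀ a b : Fin k, w (f a) < w (f b) ↔ q a < q b

/-- `w` is a permutation of the regular multiset `[n]_m`: each letter occurs exactly `m` times. -/
def IsRegularWord {l n : ℕ} (m : ℕ) (w : Fin l → Fin n) : Prop :=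
  ∀ j : Fin n, (Finset.univ.filter fun i => w i = j).card = m

/-- Ordered-subgraph containment for simple bipartite graphs given by their edge sets. -/
def GraphContains {n n' k k' : ℕ} (P : Finset (Fin n × Fin n')) (Q : Finset (Fin k × Fin k')) :
    Prop :=
  ∃ (f : Fin k → Fin n) (f' : Fin k' → Fin n'),
    StrictMono f ∧ StrictMono f' ∧ ∀ v v', (v, v') ∈ Q → (f v, f' v') ∈ P

/-- The bipartite graph associated to a permutation `q`: edges `(i, q i)`. -/
def permGraph {k : ℕ} (q : Equiv.Perm (Fin k)) : Finset (Fin k × Fin k) :=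
  Finset.univ.image fun i => (i, q i)

/-- The bipartite graph associated to a word `w`: edges `(i, w i)`. -/
def wordGraph {l n : ℕ} (w : Fin l → Fin n) : Finset (Fin l × Fin n) :=
  Finset.univ.image fun i => (i, w i)

/-- Pattern containment for 0-1 matrices. -/
def MatContains {n n' k k' : ℕ} (P : Fin n → Fin n' → Bool) (Q : Fin k → Fin k' → Bool) : Prop :=
  ∃ (r : Fin k → Fin n) (c : Fin k' → Fin n'),
    StrictMono r ∧ StrictMono c ∧ ∀ i j, Q i j = true → P (r i) (c j) = true

/-- The permutation matrix of a permutation `q`: 1-entry at `(i, q i)`. -/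
def permMatrix {k : ℕ} (q : Equiv.Perm (Fin k)) : Fin k → Fin k → Bool :=
  fun i j => decide (q i = j)

/-- The number of 1-entries of a 0-1 matrix. -/
def oneEntries {n n' : ℕ} (P : Fin n → Fin n' → Bool) : ℕ :=
  (Finset.univ.filter fun ij : Fin n × Fin n' => P ij.1 ij.2 = true).card

/-- The contraction of a bipartite graph on `([n·m],[n])` to one on `([n],[n])`:
`(i,j)` is an edge iff some vertex `t` in the `i`-th block of `m` consecutive vertices
is joined to `j`. -/
def contraction {n m : ℕ} (G : Finset (Fin (n * m) × Fin n)) : Finset (Fin n × Fin n) :=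
  Finset.univ.filter fun ij : Fin n × Fin n =>
    ∃ t : Fin (n * m), (t, ij.2) ∈ G ∧ m * (ij.1 : ℕ) ≤ (t : ℕ) ∧ (t : ℕ) < m * ((ij.1 : ℕ) + 1)

/-- The 0-1 adjacency matrix of a bipartite graph. -/
def adjMatrix {n n' : ℕ} (G : Finset (Fin n × Fin n')) : Fin n → Fin n' → Bool :=
  fun i j => decide ((i, j) ∈ G)

/-- A word contains the multiset pattern `212`. -/
def Contains212 {l n : ℕ} (w : Fin l → Fin n) : Prop :=
  ∃ i₁ i₂ i₃ : Fin l, i₁ < i₂ ∧ i₂ < i₃ ∧ w i₁ = w i₃ ∧ w i₂ < w i₁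

theorem contraction_avoids {k : ℕ} (q : Equiv.Perm (Fin k)) {n m : ℕ}
    (G : Finset (Fin (n * m) × Fin n)) (h : GraphContains (contraction G) (permGraph q)) :
    GraphContains G (permGraph q) := by
  obtain ⟨f, f', hf, hf', h⟩ := h
  have h1 : ∀ v : Fin k, ∃ t : Fin (n * m), (t, f' (q v)) ∈ G ∧
      m * (f v : ℕ) ≤ (t : ℕ) ∧ (t : ℕ) < m * ((f v : ℕ) + 1) := by
    intro v
    have := h v (q v) (by simp [permGraph])
    simpa [contraction] using this
  choose t ht1 ht2 ht3 using h1
  refine ⟨t, f', ?_, hf', ?_⟩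
  · intro a b hab
    have h2 : (f a : ℕ) + 1 ≤ f b := hf hab
    have h3 := Nat.mul_le_mul_left m h2
    have h4 := ht3 a
    have h5 := ht2 b
    exact Fin.lt_def.2 (by omega)
  · intro v v' hv
    simp only [permGraph, Finset.mem_image, Finset.mem_univ, true_and, Prod.mk.injEq] at hv
    obtain ⟨i, rfl, rfl⟩ := hv
    exact ht1 i

/-- The trace of `G` inside the block `i`, at the column `j`. -/
def blockTrace {n m : ℕ} (G : Finset (Fin (n * m) × Fin n)) (e : Fin n × Fin n) :
    Finset (Fin m) :=
  Finset.univ.filter fun s : Fin m => ∃ t : Fin (n * m), (t, e.2) ∈ G ∧ (t : ℕ) = m * e.1 + s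

theorem mem_contraction_of_mem {n m : ℕ} (hm : 0 < m) (G : Finset (Fin (n * m) × Fin n))
    (t : Fin (n * m)) (j : Fin n) (h : (t, j) ∈ G) (i : Fin n) (hi : (i : ℕ) = t / m) :
    (i, j) ∈ contraction G := by
  simp only [contraction, Finset.mem_filter, Finset.mem_univ, true_and]
  refine ⟨t, h, ?_, ?_⟩
  · rw [hi]; exact Nat.mul_div_le _ _
  · rw [hi]; exact Nat.lt_mul_div_succ _ hm

theorem subset_of_trace {n m : ℕ} (hm : 0 < m) (G H : Finset (Fin (n * m) × Fin n))
    (h : ∀ e ∈ contraction G, blockTrace G e = blockTrace H e) : G ⊆ H := by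
  rintro ⟨t, j⟩ ht
  have hlt : (t : ℕ) / m < n := Nat.div_lt_of_lt_mul (lt_of_lt_of_eq t.2 (Nat.mul_comm n m))
  have hc := mem_contraction_of_mem hm G t j ht ⟨t / m, hlt⟩ rfl
  have he := h _ hc
  have hs : (⟨t % m, Nat.mod_lt _ hm⟩ : Fin m) ∈ blockTrace G (⟨t / m, hlt⟩, j) := by
    simp only [blockTrace, Finset.mem_filter, Finset.mem_univ, true_and]
    exact ⟨t, ht, (Nat.div_add_mod _ _).symm⟩
  rw [he] at hs
  simp only [blockTrace, Finset.mem_filter, Finset.mem_univ, true_and] at hs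
  obtain ⟨t', ht', e⟩ := hs
  rw [Nat.div_add_mod] at e
  rwa [Fin.ext e] at ht'

theorem fiber_card {n m : ℕ} (hm : 0 < m) (P : Finset (Fin n × Fin n))
    (S : Finset (Finset (Fin (n * m) × Fin n))) (hS : ∀ G ∈ S, contraction G = P) :
    S.card ≤ (2 ^ m - 1) ^ P.card := by
  have hcard : (P.pi fun _ => (Finset.univ : Finset (Finset (Fin m))).erase ∅).card
      = (2 ^ m - 1) ^ P.card := by
    rw [Finset.card_pi, Finset.prod_const, Finset.card_erase_of_mem (Finset.mem_univ _)]
    simp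
  rw [← hcard]
  refine Finset.card_le_card_of_injOn (fun G e _ => blockTrace G e) ?_ ?_
  · intro G hG
    simp only [Finset.mem_coe, Finset.mem_pi, Finset.mem_erase, Finset.mem_univ, and_true]
    intro e he
    rw [← hS G hG] at he
    simp only [contraction, Finset.mem_filter, Finset.mem_univ, true_and] at he
    obtain ⟨t, ht, h1, h2⟩ := he
    rw [Nat.mul_add] at h2
    refine Finset.ne_empty_of_mem (a := ⟨t - m * e.1, by omega⟩) ?_
    simp only [blockTrace, Finset.mem_filter, Finset.mem_univ, true_and]
    exact ⟨t, ht, by omega⟩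
  · intro G hG H hH hGH
    have key : ∀ e ∈ P, blockTrace G e = blockTrace H e := fun e he =>
      congrFun (congrFun hGH e) he
    apply Finset.Subset.antisymm
    · exact subset_of_trace hm G H fun e he => key e (hS G hG ▸ he)
    · exact subset_of_trace hm H G fun e he => (key e (hS H hH ▸ he)).symm

/-- `G_{n,m}(q) ≤ (2^m - 1)^(d·n) · G_{n,1}(q)`. -/
theorem graph_count_contraction_bound {k : ℕ} (q : Equiv.Perm (Fin k)) (n m d : ℕ)
    (hn : 0 < n) (hm : 0 < m)
    (hd : ∀ P : Finset (Fin n × Fin n), ¬ GraphContains P (permGraph q) → P.card ≤ d * n) :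
    Nat.card {G : Finset (Fin (n * m) × Fin n) // ¬ GraphContains G (permGraph q)} ≤
      (2 ^ m - 1) ^ (d * n) *
        Nat.card {P : Finset (Fin n × Fin n) // ¬ GraphContains P (permGraph q)} := by
  classical
  rw [Nat.card_eq_fintype_card, Nat.card_eq_fintype_card, Fintype.card_subtype,
    Fintype.card_subtype]
  refine Finset.card_le_mul_card_image_of_maps_to (f := contraction) ?_ _ ?_
  · intro G hG
    simp only [Finset.mem_filter, Finset.mem_univ, true_and] at hG ⊢
    exact fun h => hG (contraction_avoids q G h)
  · intro P hP
    simp only [Finset.mem_filter, Finset.mem_univ, true_and] at hP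
    refine (fiber_card hm P _ fun G hG => (Finset.mem_filter.1 hG).2).trans ?_
    refine Nat.pow_le_pow_right ?_ (hd P hP)
    have := Nat.one_lt_two_pow hm.ne'
    omega
end

section
/- Let q be a permutation of length k with permutation matrix M_q, and suppose d is a constant such that for every positive integer n, every n×n 0-1 matrix avoiding M_q has at most d·n entries equal to 1. Then for all positive integers n and m, the number G_{n,m}(q) of simple bipartite graphs on ([n·m],[n]) avoiding the bipartite graph G_q as an ordered subgraph satisfies G_{n,m}(q) ≤ ((2^m − 1) · 15^2)^(d·n). -/
theorem aux_count {α β γ : Type*} [Fintype α] [DecidableEq α] [Fintype β] [DecidableEq β]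
    [Fintype γ] (F : α → β) (μ : α → γ) (hinj : ∀ x y, F x = F y → μ x = μ y → x = y)
    (hpos : 0 < Fintype.card γ)
    (A : Finset (Finset α)) (B : Finset (Finset β)) (D : ℕ)
    (hAB : ∀ G ∈ A, G.image F ∈ B) (hB : ∀ H ∈ B, H.card ≤ D) :
    A.card ≤ (2 ^ Fintype.card γ - 1) ^ D * B.card := by
  classical
  have h1 : 1 ≤ 2 ^ Fintype.card γ - 1 := by
    have : 2 ^ 1 ≤ 2 ^ Fintype.card γ := Nat.pow_le_pow_right (by norm_num) hpos
    omega
  refine Finset.card_le_mul_card_image_of_maps_to (f := fun G => G.image F) hAB _ ?_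
  intro H hH
  let S : β → Finset (Finset α) := fun b => ((Finset.univ.filter fun x => F x = b).powerset).erase ∅
  have hS : ∀ b, (S b).card ≤ 2 ^ Fintype.card γ - 1 := by
    intro b
    have h2 : (Finset.univ.filter fun x => F x = b).card ≤ Fintype.card γ := by
      rw [← Finset.card_univ]
      refine Finset.card_le_card_of_injOn μ (fun _ _ => Finset.mem_coe.2 (Finset.mem_univ _)) ?_
      intro x hx y hy hxy
      simp at hx hy
      exact hinj x y (hx.trans hy.symm) hxy
    have h3 : (S b).card = 2 ^ (Finset.univ.filter fun x => F x = b).card - 1 := by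
      rw [Finset.card_erase_of_mem (by simp), Finset.card_powerset]
    rw [h3]
    exact Nat.sub_le_sub_right (Nat.pow_le_pow_right (by norm_num) h2) 1
  calc (A.filter fun G => G.image F = H).card ≤ (H.pi S).card := by
        refine Finset.card_le_card_of_injOn
          (fun G => fun b _ => G.filter fun x => F x = b) ?_ ?_
        · intro G hG
          simp only [Finset.coe_filter, Set.mem_setOf_eq] at hG
          obtain ⟨_, hG⟩ := hG
          simp only [Finset.mem_coe, Finset.mem_pi]
          intro b hb
          rw [← hG, Finset.mem_image] at hb
          obtain ⟨x, hx, hxb⟩ := hb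
          refine Finset.mem_erase.2 ⟨Finset.Nonempty.ne_empty ⟨x, by simp [hx, hxb]⟩, ?_⟩
          rw [Finset.mem_powerset]
          exact Finset.filter_subset_filter _ (Finset.subset_univ _)
        · intro G hG G' hG' h
          simp only [Finset.coe_filter, Set.mem_setOf_eq] at hG hG'
          have key : ∀ b ∈ H, (G.filter fun x => F x = b) = G'.filter fun x => F x = b :=
            fun b hb => congrFun (congrFun h b) hb
          ext x
          constructor
          · intro hx
            have hb : F x ∈ H := hG.2 ▸ Finset.mem_image_of_mem F hx
            have : x ∈ G.filter fun y => F y = F x := by simp [hx]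
            rw [key _ hb] at this
            exact (Finset.mem_filter.1 this).1
          · intro hx
            have hb : F x ∈ H := hG'.2 ▸ Finset.mem_image_of_mem F hx
            have : x ∈ G'.filter fun y => F y = F x := by simp [hx]
            rw [← key _ hb] at this
            exact (Finset.mem_filter.1 this).1
    _ = ∏ b ∈ H, (S b).card := Finset.card_pi _ _
    _ ≤ ∏ b ∈ H, (2 ^ Fintype.card γ - 1) := Finset.prod_le_prod' fun b _ => hS b
    _ = (2 ^ Fintype.card γ - 1) ^ H.card := by simp
    _ ≤ _ := Nat.pow_le_pow_right h1 (hB H hH)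

theorem aux_contract {a b n n' k : ℕ} (q : Equiv.Perm (Fin k)) (φ : Fin a → Fin n)
    (ψ : Fin b → Fin n') (hφ : Monotone φ) (hψ : Monotone ψ) (G : Finset (Fin a × Fin b))
    (h : GraphContains (G.image fun x => (φ x.1, ψ x.2)) (permGraph q)) :
    GraphContains G (permGraph q) := by
  obtain ⟨f, f', hf, hf', h⟩ := h
  have h2 : ∀ i, ∃ x ∈ G, φ x.1 = f i ∧ ψ x.2 = f' (q i) := by
    intro i
    have := h i (q i) (by simp [permGraph])
    simpa [Finset.mem_image, Prod.ext_iff] using this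
  choose x hx hx1 hx2 using h2
  refine ⟨fun i => (x i).1, fun j => (x (q.symm j)).2, ?_, ?_, ?_⟩
  · intro i j hij
    apply hφ.reflect_lt
    rw [hx1, hx1]
    exact hf hij
  · intro i j hij
    apply hψ.reflect_lt
    rw [hx2, hx2]
    simpa using hf' hij
  · intro v v' hv
    simp only [permGraph, Finset.mem_image, Finset.mem_univ, true_and, Prod.mk.injEq] at hv
    obtain ⟨i, rfl, rfl⟩ := hv
    simpa using hx i

open Classical in
/-- The avoiders. -/
noncomputable def avoiders {k : ℕ} (q : Equiv.Perm (Fin k)) (a b : ℕ) :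
    Finset (Finset (Fin a × Fin b)) :=
  Finset.univ.filter fun G => ¬ GraphContains G (permGraph q)

theorem aux_edges {k : ℕ} (q : Equiv.Perm (Fin k)) (d : ℕ)
    (hd : ∀ n : ℕ, 0 < n → ∀ P : Fin n → Fin n → Bool,
      ¬ MatContains P (permMatrix q) → oneEntries P ≤ d * n) (n : ℕ) (hn : 0 < n)
    (G : Finset (Fin n × Fin n)) (hG : G ∈ avoiders q n n) : G.card ≤ d * n := by
  have h := hd n hn (adjMatrix G) ?_
  · simpa [oneEntries, adjMatrix] using h
  · rintro ⟨r, c, hr, hc, h⟩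
    simp only [avoiders, Finset.mem_filter, Finset.mem_univ, true_and] at hG
    refine hG ⟨r, c, hr, hc, ?_⟩
    intro v v' hv
    simp only [permGraph, Finset.mem_image, Finset.mem_univ, true_and, Prod.mk.injEq] at hv
    obtain ⟨i, rfl, rfl⟩ := hv
    simpa [adjMatrix] using h i (q i) (by simp [permMatrix])

theorem aux_divNat_mono (n m : ℕ) : Monotone (Fin.divNat : Fin (n * m) → Fin n) := by
  intro x y h
  rw [Fin.le_def, Fin.coe_divNat, Fin.coe_divNat]
  exact Nat.div_le_div_right h

theorem aux_divmod {n m : ℕ} (x y : Fin (n * m)) (h : x.divNat = y.divNat)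
    (h' : x.modNat = y.modNat) : x = y :=
  finProdFinEquiv.symm.injective (Prod.ext h h')

theorem aux_embed {k : ℕ} (q : Equiv.Perm (Fin k)) {n N : ℕ} (h : n ≤ N) :
    (avoiders q n n).card ≤ (avoiders q N N).card := by
  let e : Fin n × Fin n ↪ Fin N × Fin N :=
    (Fin.castLEEmb h).prodMap (Fin.castLEEmb h)
  refine Finset.card_le_card_of_injOn (fun G => G.map e) ?_
    (Finset.map_injective e).injOn
  intro G hG
  simp only [avoiders, Finset.coe_filter, Finset.mem_univ, true_and, Set.mem_setOf_eq] at hG ⊢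
  rintro ⟨f, f', hf, hf', H⟩
  apply hG
  have h2 : ∀ i, ∃ x ∈ G, Fin.castLE h x.1 = f i ∧ Fin.castLE h x.2 = f' (q i) := by
    intro i
    have := H i (q i) (by simp [permGraph])
    simpa [e, Finset.mem_map, Prod.ext_iff] using this
  choose x hx hx1 hx2 using h2
  refine ⟨fun i => (x i).1, fun j => (x (q.symm j)).2, ?_, ?_, ?_⟩
  · intro i j hij
    have := hf hij
    rw [← hx1, ← hx1] at this
    simpa using this
  · intro i j hij
    have : f' (q (q.symm i)) < f' (q (q.symm j)) := by simpa using hf' hij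
    rw [← hx2, ← hx2] at this
    simpa using this
  · intro v v' hv
    simp only [permGraph, Finset.mem_image, Finset.mem_univ, true_and, Prod.mk.injEq] at hv
    obtain ⟨i, rfl, rfl⟩ := hv
    simpa using hx i

theorem aux_one {k : ℕ} (q : Equiv.Perm (Fin k)) (d : ℕ)
    (hd : ∀ n : ℕ, 0 < n → ∀ P : Fin n → Fin n → Bool,
      ¬ MatContains P (permMatrix q) → oneEntries P ≤ d * n) :
    (avoiders q 1 1).card ≤ 15 ^ d := by
  rcases Nat.eq_zero_or_pos d with rfl | hpos
  · have : avoiders q 1 1 ⊆ {∅} := by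
      intro G hG
      have := aux_edges q 0 hd 1 one_pos G hG
      simpa using this
    simpa using Finset.card_le_card this
  · calc (avoiders q 1 1).card ≤ (Finset.univ : Finset (Finset (Fin 1 × Fin 1))).card :=
          Finset.card_le_card (Finset.subset_univ _)
      _ = 2 := by simp
      _ ≤ 15 ^ 1 := by norm_num
      _ ≤ 15 ^ d := Nat.pow_le_pow_right (by norm_num) hpos

theorem aux_pow {k : ℕ} (q : Equiv.Perm (Fin k)) (d : ℕ)
    (hd : ∀ n : ℕ, 0 < n → ∀ P : Fin n → Fin n → Bool,
      ¬ MatContains P (permMatrix q) → oneEntries P ≤ d * n) (h : ℕ) :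
    (avoiders q (2 ^ h) (2 ^ h)).card ≤ 15 ^ (d * 2 ^ h) := by
  induction h with
  | zero => simpa using aux_one q d hd
  | succ h ih =>
    have key := aux_count (γ := Fin 2 × Fin 2)
      (fun x : Fin (2 ^ h * 2) × Fin (2 ^ h * 2) => (x.1.divNat, x.2.divNat))
      (fun x => (x.1.modNat, x.2.modNat))
      (by
        rintro ⟨x, y⟩ ⟨x', y'⟩ h1 h2
        simp only [Prod.mk.injEq] at h1 h2
        exact Prod.ext (aux_divmod _ _ h1.1 h2.1) (aux_divmod _ _ h1.2 h2.2))
      (by simp) (avoiders q (2 ^ h * 2) (2 ^ h * 2)) (avoiders q (2 ^ h) (2 ^ h)) (d * 2 ^ h)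
      (by
        intro G hG
        simp only [avoiders, Finset.mem_filter, Finset.mem_univ, true_and] at hG ⊢
        exact fun hc => hG (aux_contract q _ _ (aux_divNat_mono _ _) (aux_divNat_mono _ _) G hc))
      (fun H hH => aux_edges q d hd _ (by positivity) H hH)
    rw [pow_succ]
    refine key.trans ?_
    have e : 2 ^ Fintype.card (Fin 2 × Fin 2) - 1 = 15 := by simp
    rw [e]
    calc _ ≤ 15 ^ (d * 2 ^ h) * 15 ^ (d * 2 ^ h) := Nat.mul_le_mul_left _ ih
      _ = _ := by rw [← pow_add]; congr 1; ring

/-- `G_{n,m}(q) ≤ ((2^m - 1) · 15^2)^(d·n)` under Füredi–Hajnal. -/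
theorem graph_count_bound {k : ℕ} (q : Equiv.Perm (Fin k)) (d : ℕ)
    (hd : ∀ n : ℕ, 0 < n → ∀ P : Fin n → Fin n → Bool,
      ¬ MatContains P (permMatrix q) → oneEntries P ≤ d * n)
    (n m : ℕ) (hn : 0 < n) (hm : 0 < m) :
    Nat.card {G : Finset (Fin (n * m) × Fin n) // ¬ GraphContains G (permGraph q)} ≤
      ((2 ^ m - 1) * 15 ^ 2) ^ (d * n) := by
  classical
  have e : Nat.card {G : Finset (Fin (n * m) × Fin n) // ¬ GraphContains G (permGraph q)}
      = (avoiders q (n * m) n).card := by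
    rw [Nat.card_eq_fintype_card, Fintype.card_subtype]
    unfold avoiders
    congr
  rw [e]
  have key := aux_count (γ := Fin m)
    (fun x : Fin (n * m) × Fin n => (x.1.divNat, x.2)) (fun x => x.1.modNat)
    (by
      rintro ⟨x, y⟩ ⟨x', y'⟩ h1 h2
      simp only [Prod.mk.injEq] at h1 h2
      exact Prod.ext (aux_divmod _ _ h1.1 h2) h1.2)
    (by simpa using hm) (avoiders q (n * m) n) (avoiders q n n) (d * n)
    (by
      intro G hG
      simp only [avoiders, Finset.mem_filter, Finset.mem_univ, true_and] at hG ⊢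
      exact fun hc => hG (aux_contract q _ id (aux_divNat_mono _ _) monotone_id G hc))
    (fun H hH => aux_edges q d hd _ hn H hH)
  rw [Fintype.card_fin] at key
  rw [mul_pow]
  refine key.trans (Nat.mul_le_mul_left _ ?_)
  obtain ⟨h, h1, h2⟩ : ∃ h, n ≤ 2 ^ h ∧ 2 ^ h ≤ 2 * n := by
    refine ⟨Nat.log 2 n + 1, (Nat.lt_pow_succ_log_self (by norm_num) n).le, ?_⟩
    have := Nat.pow_log_le_self 2 hn.ne'
    rw [pow_succ]
    omega
  calc _ ≤ _ := aux_embed q h1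
    _ ≤ _ := aux_pow q d hd h
    _ ≤ 15 ^ (d * (2 * n)) := Nat.pow_le_pow_right (by norm_num) (Nat.mul_le_mul_left _ h2)
    _ = _ := by rw [← pow_mul]; congr 1; ring
end

section
/- For every positive integer k there exists a constant e ≥ 1, depending only on k, such that for every permutation pattern q of length k, every positive integer n, and every choice of positive multiplicities m_1, …, m_n with maximum M, the number of q-avoiding permutations of the multiset {1^{m_1}, 2^{m_2}, …, n^{m_n}} is at most e^(n·M). -/
/-- Containment of the permutation matrix of `q` in a finite set of cells. -/
def CellCont {k : ℕ} (q : Equiv.Perm (Fin k)) (A : Finset (ℕ × ℕ)) : Prop :=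
  ∃ r c : Fin k → ℕ, StrictMono r ∧ StrictMono c ∧ ∀ i, (r i, c (q i)) ∈ A

/-- The block of a cell. -/
def blk (s : ℕ) (p : ℕ × ℕ) : ℕ × ℕ := (p.1 / s, p.2 / s)

/-- The cells of `A` in block `b`. -/
def fib (s : ℕ) (A : Finset (ℕ × ℕ)) (b : ℕ × ℕ) : Finset (ℕ × ℕ) :=
  A.filter (fun p => blk s p = b)

/-- The square grid. -/
def grid (N : ℕ) : Finset (ℕ × ℕ) := Finset.range N ×ˢ Finset.range N

lemma div_lt_imp {a b s : ℕ} (h : a / s < b / s) : a < b := by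
  by_contra h'
  exact absurd (Nat.div_le_div_right (c := s) (not_lt.mp h')) (by omega)

lemma contr_avoid {k : ℕ} (q : Equiv.Perm (Fin k)) (s : ℕ) (A : Finset (ℕ × ℕ))
    (h : CellCont q (A.image (blk s))) : CellCont q A := by
  obtain ⟨r, c, hr, hc, hA⟩ := h
  have : ∀ i, ∃ p ∈ A, p.1 / s = r i ∧ p.2 / s = c (q i) := by
    intro i
    obtain ⟨p, hp, e⟩ := Finset.mem_image.mp (hA i)
    simp only [blk, Prod.mk.injEq] at e
    exact ⟨p, hp, e⟩
  choose p hp h1 h2 using this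
  refine ⟨fun i => (p i).1, fun j => (p (q.symm j)).2, ?_, ?_, ?_⟩
  · intro i j hij
    apply div_lt_imp (s := s)
    rw [h1, h1]; exact hr hij
  · intro i j hij
    apply div_lt_imp (s := s)
    rw [h2, h2]; simpa using hc hij
  · intro i; simpa using hp i

lemma contr_grid {s n : ℕ} {A : Finset (ℕ × ℕ)} (hA : A ⊆ grid (s * n)) :
    A.image (blk s) ⊆ grid n := by
  intro b hb
  obtain ⟨p, hp, rfl⟩ := Finset.mem_image.mp hb
  have := hA hp
  simp only [grid, Finset.mem_product, Finset.mem_range, blk] at this ⊢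
  exact ⟨Nat.div_lt_of_lt_mul this.1, Nat.div_lt_of_lt_mul this.2⟩

/-- Wide blocks. -/
def wide (k s : ℕ) (A : Finset (ℕ × ℕ)) : Finset (ℕ × ℕ) :=
  (A.image (blk s)).filter (fun b => k ≤ ((fib s A b).image Prod.snd).card)

/-- Tall blocks. -/
def tall (k s : ℕ) (A : Finset (ℕ × ℕ)) : Finset (ℕ × ℕ) :=
  (A.image (blk s)).filter (fun b => k ≤ ((fib s A b).image Prod.fst).card)

lemma mem_block {s a b : ℕ} (hs : 0 < s) (h : a / s = b) : a ∈ Finset.Ico (s * b) (s * b + s) := by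
  subst h
  rw [Finset.mem_Ico]
  exact ⟨Nat.mul_div_le a s, by have := Nat.lt_mul_div_succ a hs; rw [Nat.mul_add] at this; omega⟩

lemma snd_sub {s : ℕ} (hs : 0 < s) (A : Finset (ℕ × ℕ)) (b : ℕ × ℕ) :
    (fib s A b).image Prod.snd ⊆ Finset.Ico (s * b.2) (s * b.2 + s) := by
  intro y hy
  obtain ⟨p, hp, rfl⟩ := Finset.mem_image.mp hy
  simp only [fib, Finset.mem_filter] at hp
  exact mem_block hs (congrArg Prod.snd hp.2)

lemma fst_sub {s : ℕ} (hs : 0 < s) (A : Finset (ℕ × ℕ)) (b : ℕ × ℕ) :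
    (fib s A b).image Prod.fst ⊆ Finset.Ico (s * b.1) (s * b.1 + s) := by
  intro y hy
  obtain ⟨p, hp, rfl⟩ := Finset.mem_image.mp hy
  simp only [fib, Finset.mem_filter] at hp
  exact mem_block hs (congrArg Prod.fst hp.2)

lemma wide_card {k : ℕ} (hk : 0 < k) (q : Equiv.Perm (Fin k)) {s n : ℕ} (hs : 0 < s)
    {A : Finset (ℕ × ℕ)} (hA : A ⊆ grid (s * n)) (hav : ¬ CellCont q A) :
    (wide k s A).card ≤ k * (n * 2 ^ s) := by
  have hex : ∀ b, ∃ S : Finset ℕ, b ∈ wide k s A →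
      S ⊆ (fib s A b).image Prod.snd ∧ S.card = k := by
    intro b
    by_cases hb : b ∈ wide k s A
    · obtain ⟨S, h1, h2⟩ := Finset.exists_subset_card_eq (Finset.mem_filter.mp hb).2
      exact ⟨S, fun _ => ⟨h1, h2⟩⟩
    · exact ⟨∅, fun h => absurd h hb⟩
  choose S hS using hex
  set T := (Finset.range n).biUnion
    (fun j => (Finset.Ico (s * j) (s * j + s)).powerset) with hT
  have hTc : T.card ≤ n * 2 ^ s := by
    have := Finset.card_biUnion_le_card_mul (Finset.range n)
      (fun j => (Finset.Ico (s * j) (s * j + s)).powerset) (2 ^ s)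
      (fun j _ => by simp [Finset.card_powerset])
    simpa [hT] using this
  have hmaps : ∀ b ∈ wide k s A, S b ∈ T := by
    intro b hb
    rw [hT, Finset.mem_biUnion]
    have hb' := contr_grid hA (Finset.mem_filter.mp hb).1
    refine ⟨b.2, (Finset.mem_product.mp hb').2, ?_⟩
    rw [Finset.mem_powerset]
    exact (hS b hb).1.trans (snd_sub hs A b)
  refine (Finset.card_le_mul_card_image_of_maps_to hmaps k ?_).trans (Nat.mul_le_mul_left _ hTc)
  intro U hU
  by_contra hlt
  push Not at hlt
  apply hav
  set F := (wide k s A).filter (fun b => S b = U) with hF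
  have hFm : ∀ b ∈ F, b ∈ wide k s A ∧ S b = U := fun b hb => Finset.mem_filter.mp hb
  obtain ⟨b0, hb0⟩ : F.Nonempty := Finset.card_pos.mp (by omega)
  have hUc : U.card = k := by
    have := hFm b0 hb0
    rw [← this.2]; exact (hS b0 this.1).2
  have hcell : ∀ b ∈ F, ∀ y ∈ U, ∃ x, (x, y) ∈ A ∧ x / s = b.1 ∧ y / s = b.2 := by
    intro b hb y hy
    obtain ⟨hw, e⟩ := hFm b hb
    rw [← e] at hy
    obtain ⟨p, hp, e2⟩ := Finset.mem_image.mp ((hS b hw).1 hy)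
    obtain ⟨h1, h2⟩ := Finset.mem_filter.mp hp
    subst e2
    exact ⟨p.1, h1, congrArg Prod.fst h2, congrArg Prod.snd h2⟩
  obtain ⟨y0, hy0⟩ : U.Nonempty := Finset.card_pos.mp (by omega)
  have hinj : Set.InjOn Prod.fst (F : Set (ℕ × ℕ)) := by
    intro a ha b hb hab
    obtain ⟨_, _, _, h1⟩ := hcell a ha y0 hy0
    obtain ⟨_, _, _, h2⟩ := hcell b hb y0 hy0
    exact Prod.ext hab (h1.symm.trans h2)
  have hFi : k ≤ (F.image Prod.fst).card := by
    rw [Finset.card_image_of_injOn hinj]; omega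
  obtain ⟨R, hRs, hRc⟩ := Finset.exists_subset_card_eq hFi
  have hx : ∀ i : Fin k, ∃ x, (x, U.orderEmbOfFin hUc (q i)) ∈ A ∧
      x / s = R.orderEmbOfFin hRc i := by
    intro i
    obtain ⟨b, hb, e⟩ := Finset.mem_image.mp (hRs (R.orderEmbOfFin_mem hRc i))
    obtain ⟨x, h1, h2, _⟩ := hcell b hb _ (U.orderEmbOfFin_mem hUc (q i))
    exact ⟨x, h1, h2.trans e⟩
  choose x hx1 hx2 using hx
  refine ⟨x, fun j => U.orderEmbOfFin hUc j, ?_, (U.orderEmbOfFin hUc).strictMono, hx1⟩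
  intro i j hij
  apply div_lt_imp (s := s)
  rw [hx2, hx2]
  exact (R.orderEmbOfFin hRc).strictMono hij

lemma tall_card {k : ℕ} (hk : 0 < k) (q : Equiv.Perm (Fin k)) {s n : ℕ} (hs : 0 < s)
    {A : Finset (ℕ × ℕ)} (hA : A ⊆ grid (s * n)) (hav : ¬ CellCont q A) :
    (tall k s A).card ≤ k * (n * 2 ^ s) := by
  have hA' : A.image Prod.swap ⊆ grid (s * n) := by
    intro p0 hp0
    obtain ⟨p, hp', rfl⟩ := Finset.mem_image.mp hp0
    have := hA hp'
    simp only [grid, Finset.mem_product] at this ⊢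
    exact this.symm
  have hav' : ¬ CellCont q.symm (A.image Prod.swap) := by
    rintro ⟨r, c, hr, hc, h⟩
    refine hav ⟨c, r, hc, hr, fun i => ?_⟩
    obtain ⟨p, hp, e⟩ := Finset.mem_image.mp (h (q i))
    rw [Equiv.symm_apply_apply] at e
    have : p = (c i, r (q i)) := by rw [← Prod.swap_swap p, e]; rfl
    rwa [this] at hp
  refine le_trans ?_ (wide_card hk q.symm hs hA' hav')
  apply Finset.card_le_card_of_injOn Prod.swap
  · intro b hb
    obtain ⟨h1, h2⟩ := Finset.mem_filter.mp hb
    obtain ⟨p, hp, rfl⟩ := Finset.mem_image.mp h1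
    refine Finset.mem_filter.mpr ⟨Finset.mem_image.mpr
      ⟨p.swap, Finset.mem_image_of_mem _ hp, rfl⟩, h2.trans (Finset.card_le_card ?_)⟩
    intro x hx
    obtain ⟨p', hp', rfl⟩ := Finset.mem_image.mp hx
    obtain ⟨h3, h4⟩ := Finset.mem_filter.mp hp'
    refine Finset.mem_image.mpr ⟨p'.swap, Finset.mem_filter.mpr
      ⟨Finset.mem_image_of_mem _ h3, ?_⟩, rfl⟩
    rw [← h4]; rfl
  · exact Prod.swap_injective.injOn

lemma fib_card_le {s : ℕ} (A : Finset (ℕ × ℕ)) (b : ℕ × ℕ) :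
    (fib s A b).card ≤
      ((fib s A b).image Prod.fst).card * ((fib s A b).image Prod.snd).card := by
  rw [← Finset.card_product]
  exact Finset.card_le_card Finset.subset_product

lemma fib_card_sq {s : ℕ} (hs : 0 < s) (A : Finset (ℕ × ℕ)) (b : ℕ × ℕ) :
    (fib s A b).card ≤ s * s := by
  refine (fib_card_le A b).trans (Nat.mul_le_mul ?_ ?_)
  · simpa using Finset.card_le_card (fst_sub hs A b)
  · simpa using Finset.card_le_card (snd_sub hs A b)

lemma mt_step {k : ℕ} (hk : 0 < k) (q : Equiv.Perm (Fin k)) {s n : ℕ} (hs : 0 < s)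
    {A : Finset (ℕ × ℕ)} (hA : A ⊆ grid (s * n)) (hav : ¬ CellCont q A) :
    A.card ≤ k * k * (A.image (blk s)).card + 2 * (s * s * (k * 2 ^ s)) * n := by
  have hw := wide_card hk q hs hA hav
  have ht := tall_card hk q hs hA hav
  have h1 : A.card = ∑ b ∈ A.image (blk s), (fib s A b).card :=
    Finset.card_eq_sum_card_image (blk s) A
  have h2 : ∀ b ∈ A.image (blk s), (fib s A b).card ≤ k * k +
      (if k ≤ ((fib s A b).image Prod.snd).card then s * s else 0) +
      (if k ≤ ((fib s A b).image Prod.fst).card then s * s else 0) := by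
    intro b _
    have := fib_card_sq hs A b
    split_ifs with ha hb hb
    · omega
    · omega
    · omega
    · have := (fib_card_le (s := s) A b).trans (Nat.mul_le_mul (not_le.mp hb).le (not_le.mp ha).le)
      omega
  have h3 := Finset.sum_le_sum h2
  rw [← h1, Finset.sum_add_distrib, Finset.sum_add_distrib, ← Finset.sum_filter,
    ← Finset.sum_filter, Finset.sum_const, Finset.sum_const, Finset.sum_const] at h3
  simp only [smul_eq_mul] at h3
  change A.card ≤ _ + (wide k s A).card * _ + (tall k s A).card * _ at h3
  have h4 := Nat.mul_le_mul_right (s * s) hw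
  have h5 := Nat.mul_le_mul_right (s * s) ht
  calc A.card ≤ _ := h3
    _ ≤ (A.image (blk s)).card * (k * k) + k * (n * 2 ^ s) * (s * s)
        + k * (n * 2 ^ s) * (s * s) := by omega
    _ = _ := by ring

lemma marcus_tardos {k : ℕ} (hk : 0 < k) (q : Equiv.Perm (Fin k)) {s : ℕ} (hs : k * k + 1 ≤ s) (t : ℕ) :
    ∀ A : Finset (ℕ × ℕ), A ⊆ grid (s ^ t) → ¬ CellCont q A →
      A.card ≤ 2 * (s * s * (k * 2 ^ s)) * s ^ t := by
  have hs0 : 0 < s := by omega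
  set D := 2 * (s * s * (k * 2 ^ s)) with hD
  have hD1 : 0 < D := by rw [hD]; positivity
  induction t with
  | zero =>
    intro A hA _
    have := Finset.card_le_card hA
    simp [grid] at this
    simp; omega
  | succ t ih =>
    intro A hA hav
    rw [pow_succ, mul_comm] at hA
    have h1 := mt_step hk q hs0 hA hav
    have h2 := ih _ (contr_grid hA) (fun h => hav (contr_avoid q s A h))
    calc A.card ≤ _ := h1
      _ ≤ k * k * (D * s ^ t) + D * s ^ t := by gcongr
      _ = (k * k + 1) * (D * s ^ t) := by ring
      _ ≤ s * (D * s ^ t) := by gcongr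
      _ = _ := by ring

open Classical in
/-- The family of avoiding sets. -/
noncomputable def avoidFam {k : ℕ} (q : Equiv.Perm (Fin k)) (N : ℕ) : Finset (Finset (ℕ × ℕ)) :=
  (grid N).powerset.filter (fun A => ¬ CellCont q A)

lemma klazar {k : ℕ} (hk : 0 < k) (q : Equiv.Perm (Fin k)) {s : ℕ} (hs : k * k + 1 ≤ s) (t : ℕ) :
    (avoidFam q (s ^ t)).card ≤ 2 ^ (s * s * (2 * (s * s * (k * 2 ^ s))) * s ^ t) := by
  have hs0 : 0 < s := by omega
  have hs2 : 2 ≤ s := by nlinarith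
  have hmt := marcus_tardos hk q hs
  set D := 2 * (s * s * (k * 2 ^ s)) with hD
  have hD1 : 0 < D := by rw [hD]; positivity
  induction t with
  | zero =>
    have h1 : (avoidFam q (s ^ 0)).card ≤ 2 ^ 1 := by
      classical
      unfold avoidFam
      refine (Finset.card_filter_le _ _).trans ?_
      simp [grid]
    refine h1.trans (Nat.pow_le_pow_right (by norm_num) ?_)
    have : 0 < s * s * D * s ^ 0 := by positivity
    exact this
  | succ t ih =>
    have hmem : ∀ {N : ℕ} {A}, A ∈ avoidFam q N ↔ A ⊆ grid N ∧ ¬ CellCont q A := by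
      intro N A; simp [avoidFam]
    have hmaps : ∀ A ∈ avoidFam q (s ^ (t + 1)), A.image (blk s) ∈ avoidFam q (s ^ t) := by
      intro A hA
      obtain ⟨h1, h2⟩ := hmem.mp hA
      rw [pow_succ, mul_comm] at h1
      exact hmem.mpr ⟨contr_grid h1, fun h => h2 (contr_avoid q s A h)⟩
    have hfib : ∀ B ∈ avoidFam q (s ^ t),
        ((avoidFam q (s ^ (t + 1))).filter (fun A => A.image (blk s) = B)).card
          ≤ 2 ^ (s * s * (D * s ^ t)) := by
      intro B hB
      obtain ⟨h1, h2⟩ := hmem.mp hB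
      have h3 := hmt t B h1 h2
      set G := B.biUnion (fun b => Finset.Ico (s * b.1) (s * b.1 + s) ×ˢ
        Finset.Ico (s * b.2) (s * b.2 + s)) with hG
      have hGc : G.card ≤ B.card * (s * s) :=
        Finset.card_biUnion_le_card_mul _ _ _ (fun b _ => by simp)
      refine (Finset.card_le_card (t := G.powerset) ?_).trans ?_
      · intro A hA
        have e := (Finset.mem_filter.mp hA).2
        rw [Finset.mem_powerset]
        intro p hp
        rw [hG, Finset.mem_biUnion]
        refine ⟨blk s p, e ▸ Finset.mem_image_of_mem _ hp, Finset.mem_product.mpr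
          ⟨mem_block hs0 rfl, mem_block hs0 rfl⟩⟩
      · rw [Finset.card_powerset]
        apply Nat.pow_le_pow_right (by norm_num)
        calc G.card ≤ _ := hGc
          _ ≤ (D * s ^ t) * (s * s) := by gcongr
          _ = _ := by ring
    refine (Finset.card_le_mul_card_image_of_maps_to hmaps _ hfib).trans ?_
    refine (Nat.mul_le_mul_left _ ih).trans ?_
    rw [← pow_add]
    apply Nat.pow_le_pow_right (by norm_num)
    calc s * s * (D * s ^ t) + s * s * D * s ^ t = 2 * (s * s * D * s ^ t) := by ring
      _ ≤ s * (s * s * D * s ^ t) := by gcongr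
      _ = _ := by ring

/-- Stanley–Wilf for permutations of arbitrary multisets. -/
theorem multiset_stanley_wilf_general (k : ℕ) (hk : 0 < k) :
    ∃ e : ℕ, 1 ≤ e ∧ ∀ (q : Equiv.Perm (Fin k)) (n : ℕ), 0 < n →
      ∀ m : Fin n → ℕ, (∀ i, 0 < m i) →
        Nat.card {w : Fin (∑ i, m i) → Fin n //
            (∀ j : Fin n, (Finset.univ.filter fun i => w i = j).card = m j) ∧
              ¬ WordContains w q} ≤
          e ^ (n * Finset.univ.sup m) := by
  have hs : k * k + 1 ≤ k * k + 1 := le_rfl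
  set s := k * k + 1 with hsdef
  set E := s * s * (2 * (s * s * (k * 2 ^ s))) with hE
  have hs2 : 2 ≤ s := by nlinarith
  refine ⟨2 ^ (E * s), Nat.one_le_two_pow, ?_⟩
  intro q n hn m hm
  set N := n * Finset.univ.sup m with hN
  have hle : ∀ i, m i ≤ Finset.univ.sup m := fun i => Finset.le_sup (Finset.mem_univ i)
  have hM : 0 < Finset.univ.sup m := lt_of_lt_of_le (hm ⟨0, hn⟩) (hle _)
  have hN0 : 0 < N := Nat.mul_pos hn hM
  have hL : ∑ i, m i ≤ N := by
    refine (Finset.sum_le_sum (fun i _ => hle i)).trans ?_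
    simp [hN]
  have hnN : n ≤ N := Nat.le_mul_of_pos_right n hM
  set t := Nat.log s N + 1 with ht
  have ht1 : N ≤ s ^ t := (Nat.lt_pow_succ_log_self (by omega) N).le
  have ht2 : s ^ t ≤ s * N := by
    rw [ht, pow_succ, mul_comm]
    exact Nat.mul_le_mul_left _ (Nat.pow_log_le_self s hN0.ne')
  have key : Nat.card {w : Fin (∑ i, m i) → Fin n //
            (∀ j : Fin n, (Finset.univ.filter fun i => w i = j).card = m j) ∧
              ¬ WordContains w q} ≤ (avoidFam q (s ^ t)).card := by
    let g : (Fin (∑ i, m i) → Fin n) → Finset (ℕ × ℕ) := fun w =>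
      Finset.univ.image (fun i : Fin (∑ i, m i) => ((i : ℕ), (w i : ℕ)))
    have hmem : ∀ w : Fin (∑ i, m i) → Fin n, ¬ WordContains w q →
        g w ∈ avoidFam q (s ^ t) := by
      intro w hw
      simp only [avoidFam, Finset.mem_filter, Finset.mem_powerset]
      constructor
      · intro p hp
        obtain ⟨i, _, rfl⟩ := Finset.mem_image.mp hp
        simp only [grid, Finset.mem_product, Finset.mem_range]
        have h1 := i.isLt
        have h2 := (w i).isLt
        omega
      · rintro ⟨r, c, hr, hc, h⟩
        apply hw
        have : ∀ a, ∃ i : Fin (∑ i, m i), (i : ℕ) = r a ∧ (w i : ℕ) = c (q a) := by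
          intro a
          obtain ⟨i, _, e⟩ := Finset.mem_image.mp (h a)
          exact ⟨i, congrArg Prod.fst e, congrArg Prod.snd e⟩
        choose f hf1 hf2 using this
        refine ⟨f, ?_, ?_⟩
        · intro a b hab
          rw [Fin.lt_def, hf1, hf1]
          exact hr hab
        · intro a b
          rw [Fin.lt_def, hf2, hf2]
          exact hc.lt_iff_lt
    have hinj : Function.Injective g := by
      intro w w' e
      funext i
      have : ((i : ℕ), (w i : ℕ)) ∈ g w' := by
        rw [← e]; exact Finset.mem_image_of_mem _ (Finset.mem_univ i)
      obtain ⟨j, _, h⟩ := Finset.mem_image.mp this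
      have h1 : j = i := Fin.ext (congrArg Prod.fst h)
      subst h1
      exact Fin.ext (congrArg Prod.snd h).symm
    rw [← Nat.card_eq_finsetCard]
    refine Nat.card_le_card_of_injective (fun w => ⟨g w.1, hmem w.1 w.2.2⟩) ?_
    intro w w' e
    exact Subtype.ext (hinj (congrArg Subtype.val e))
  refine key.trans ((klazar hk q hs t).trans ?_)
  rw [← pow_mul]
  apply Nat.pow_le_pow_right (by norm_num)
  calc E * s ^ t ≤ E * (s * N) := Nat.mul_le_mul_left _ ht2
    _ = _ := by ring
end
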